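/- Let (X, <) be a linear order. Then X has poor order type if and only if X can be written as a finite union X = A₁ ∪ … ∪ A_r of subsets, each of which is either a singleton, or a subset that with the induced order is order-isomorphic to ℕ (an ascending chain of type ω), or a subset that with the induced order is order-isomorphic to ℕ with the reversed order (a descending chain of type ω*). -/

import Mathlib

/-!
The forward direction splits each summand off as one chain (types `ω`, `ω*`) or as finitely many
singletons. For the converse, call a set *ω-like* if all its initial segments are finite and
*ω\*-like* if all its final segments are finite; such sets are exactly those that are finite or of
type `ω`, resp. `ω*`, and both notions pass to subsets.

By induction on the number of ω-like or ω\*-like sets needed to cover `S` up to a finite set, `S` is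
a finite concatenation of such sets. Let `A` be one of the covering sets. By duality `A` may be
taken ω-like, and `B = A ∩ S` infinite. Let `L` be the set of elements of `S` below some element
of `B`. Then `S \ L` misses `A`. Any other covering set either meets `L` in finitely many points
beyond some `b ∈ B`, or is ω-like and cofinal in `L`. For `b` large enough, `L ∩ (b, x]` is
therefore finite for every `x ∈ L`, so `L ∩ (b, ∞)` is ω-like. Finally `L ∩ (-∞, b]` meets `A` in a
finite set. Hence `S` is the concatenation of `L ∩ (-∞, b]`, `L ∩ (b, ∞)` and `S \ L`, and the
induction hypothesis applies to the two outer pieces (`isPoor_step`).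
-/

/-- The allowed summand order types: ω, ω*, and finite orders. -/
inductive OT : Type
  | omega : OT
  | omegaStar : OT
  | fin : ℕ → OT
deriving DecidableEq

/-- The canonical linearly ordered carrier of each order type symbol. -/
def OT.carrier : OT → Type
  | .omega => ℕ
  | .omegaStar => ℕᵒᵈ
  | .fin n => Fin n

instance OT.instLinearOrder : (χ : OT) → LinearOrder χ.carrier
  | .omega => inferInstanceAs (LinearOrder ℕ)
  | .omegaStar => inferInstanceAs (LinearOrder ℕᵒᵈ)
  | .fin n => inferInstanceAs (LinearOrder (Fin n))

/-- All initial segments of `S` are finite, i.e. `S` is finite or of type `ω`. -/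
def OmegaLike {X : Type*} [LinearOrder X] (S : Set X) : Prop :=
  ∀ x ∈ S, (S ∩ Set.Iic x).Finite

/-- All final segments of `S` are finite, i.e. `S` is finite or of type `ω*`. -/
def OmegaStarLike {X : Type*} [LinearOrder X] (S : Set X) : Prop :=
  ∀ x ∈ S, (S ∩ Set.Ici x).Finite

/-- `S` is the concatenation of an increasing list of sets, each of which is finite, of type `ω`
or of type `ω*`. -/
def IsPoor {X : Type*} [LinearOrder X] (S : Set X) : Prop :=
  ∃ l : List (Set X), l.Pairwise (fun C D => ∀ x ∈ C, ∀ y ∈ D, x < y) ∧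
    (∀ x, x ∈ S ↔ ∃ C ∈ l, x ∈ C) ∧ ∀ C ∈ l, OmegaLike C ∨ OmegaStarLike C

theorem OmegaLike.isPoor {X : Type*} [LinearOrder X] {S : Set X} (h : OmegaLike S) :
    IsPoor S :=
  ⟨[S], by simp, by simp, by simp [h]⟩

theorem isPoor_of_finite {X : Type*} [LinearOrder X] {S : Set X} (h : S.Finite) : IsPoor S :=
  OmegaLike.isPoor fun _ _ => h.subset Set.inter_subset_left

theorem IsPoor.append {X : Type*} [LinearOrder X] {S T U : Set X} (hS : IsPoor S)
    (hT : IsPoor T) (hlt : ∀ x ∈ S, ∀ y ∈ T, x < y) (hU : U = S ∪ T) : IsPoor U := by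
  obtain ⟨l, hl, hlS, hlc⟩ := hS
  obtain ⟨m, hm, hmT, hmc⟩ := hT
  refine ⟨l ++ m, List.pairwise_append.2 ⟨hl, hm, ?_⟩, ?_, ?_⟩
  · intro C hC D hD x hx y hy
    exact hlt x ((hlS x).2 ⟨C, hC, hx⟩) y ((hmT y).2 ⟨D, hD, hy⟩)
  · intro x
    subst hU
    simp only [Set.mem_union, hlS, hmT, List.mem_append, or_and_right, exists_or]
  · intro C hC
    rcases List.mem_append.1 hC with h | h
    · exact hlc C h
    · exact hmc C h

theorem IsPoor.of_dual {X : Type*} [LinearOrder X] {S : Set X}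
    (h : IsPoor (X := Xᵒᵈ) (OrderDual.ofDual ⁻¹' S)) : IsPoor S := by
  obtain ⟨l, hl, hS, hc⟩ := h
  refine ⟨l.reverse, List.pairwise_reverse.2 (hl.imp ?_), ?_, ?_⟩
  · intro C D h x hx y hy
    exact h y hy x hx
  · intro x
    exact (hS x).trans (exists_congr fun C => and_congr_left' List.mem_reverse.symm)
  · intro C hC
    exact (hc C (List.mem_reverse.1 hC)).symm

theorem IsPoor.dual {X : Type*} [LinearOrder X] {S : Set X}
    (h : IsPoor S) : IsPoor (X := Xᵒᵈ) (OrderDual.ofDual ⁻¹' S) :=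
  IsPoor.of_dual (X := Xᵒᵈ) h

/-- Induction step for an ω-like set `A`: if all sets covered up to a finite set by the `C j`,
`j ∈ s`, are poor, then so are those covered up to a finite set by `A` and the `C j`. -/
theorem isPoor_step {X ι : Type*} [LinearOrder X] (C : ι → Set X)
    (hC : ∀ i, OmegaLike (C i) ∨ OmegaStarLike (C i)) (s : Finset ι)
    (ih : ∀ S : Set X, (S \ ⋃ i ∈ s, C i).Finite → IsPoor S)
    (A : Set X) (hA : OmegaLike A) (S : Set X) (hS : (S \ (A ∪ ⋃ i ∈ s, C i)).Finite) :
    IsPoor S := by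
  by_cases hB : (A ∩ S).Finite
  · refine ih S ((hS.union hB).subset ?_)
    rintro x ⟨hx, hx'⟩
    by_cases hxA : x ∈ A
    · exact Or.inr ⟨hxA, hx⟩
    · exact Or.inl ⟨hx, fun h => h.elim hxA hx'⟩
  have hne : (A ∩ S).Nonempty := Set.Infinite.nonempty hB
  set L : Set X := {x ∈ S | ∃ b ∈ A ∩ S, x ≤ b} with hL
  have key : ∀ j, ∃ b : ↥(A ∩ S), ∀ x ∈ L, (C j ∩ L ∩ Set.Ioc (b : X) x).Finite := by
    intro j
    by_cases hcof : ∃ b : ↥(A ∩ S), ∀ c ∈ C j ∩ L, c ≤ b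
    · obtain ⟨b, hb⟩ := hcof
      refine ⟨b, fun x _ => Set.Finite.subset Set.finite_empty ?_⟩
      rintro c ⟨hc, hbc, -⟩
      exact absurd (hb c hc) (not_le.2 hbc)
    push Not at hcof
    rcases hC j with h | h
    · refine ⟨⟨_, hne.choose_spec⟩, ?_⟩
      rintro x ⟨-, b, hb, hxb⟩
      obtain ⟨c, hc, hbc⟩ := hcof ⟨b, hb⟩
      refine (h c hc.1).subset ?_
      rintro y ⟨hy, -, hyx⟩
      exact ⟨hy.1, hyx.trans (hxb.trans hbc.le)⟩
    · obtain ⟨c, hc, -⟩ := hcof ⟨_, hne.choose_spec⟩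
      obtain ⟨-, b, hb, hcb⟩ := hc.2
      refine ⟨⟨b, hb⟩, fun x _ => (h c hc.1).subset ?_⟩
      rintro y ⟨hy, hby, -⟩
      exact ⟨hy.1, hcb.trans (le_of_lt hby)⟩
  choose f hf using key
  have : Nonempty ↥(A ∩ S) := hne.to_subtype
  obtain ⟨b, hb⟩ : ∃ b : ↥(A ∩ S), ∀ j ∈ s, f j ≤ b := by
    classical
    obtain ⟨b, hb⟩ := Finset.exists_le (s.image f)
    exact ⟨b, fun j hj => hb _ (Finset.mem_image_of_mem f hj)⟩
  have hlow : IsPoor (L ∩ Set.Iic (b : X)) := by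
    refine ih _ ((hS.union (hA b b.2.1)).subset ?_)
    rintro x ⟨⟨hxL, hxb⟩, hx⟩
    by_cases hxA : x ∈ A
    · exact Or.inr ⟨hxA, hxb⟩
    · exact Or.inl ⟨hxL.1, fun h => h.elim hxA hx⟩
  have hmid : IsPoor (L ∩ Set.Ioi (b : X)) := by
    refine OmegaLike.isPoor ?_
    rintro x ⟨hxL, -⟩
    obtain ⟨-, a, ha, hxa⟩ := id hxL
    have hfin : (⋃ j ∈ s, C j ∩ L ∩ Set.Ioc (f j : X) x).Finite :=
      s.finite_toSet.biUnion fun j _ => hf j x hxL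
    refine ((hS.union (hA a ha.1)).union hfin).subset ?_
    rintro y ⟨⟨hyL, hby⟩, hyx⟩
    by_cases hyA : y ∈ A
    · exact Or.inl (Or.inr ⟨hyA, le_trans hyx hxa⟩)
    by_cases hyC : y ∈ ⋃ i ∈ s, C i
    · simp only [Set.mem_iUnion] at hyC
      obtain ⟨j, hj, hyj⟩ := hyC
      refine Or.inr ?_
      simp only [Set.mem_iUnion]
      exact ⟨j, hj, ⟨hyj, hyL⟩, lt_of_le_of_lt (hb j hj) hby, hyx⟩
    · exact Or.inl (Or.inl ⟨hyL.1, fun h => h.elim hyA hyC⟩)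
  have hup : IsPoor (S \ L) := by
    refine ih _ (hS.subset ?_)
    rintro x ⟨⟨hxS, hxL⟩, hx⟩
    exact ⟨hxS, fun h => h.elim (fun hxA => hxL ⟨hxS, x, ⟨hxA, hxS⟩, le_rfl⟩) hx⟩
  have hLp : IsPoor L := by
    refine hlow.append hmid (fun x hx y hy => lt_of_le_of_lt hx.2 hy.2) ?_
    rw [← Set.inter_union_distrib_left, Set.Iic_union_Ioi, Set.inter_univ]
  refine hLp.append hup ?_ (Set.union_sdiff_cancel fun x hx => hx.1).symm
  rintro x ⟨-, a, ha, hxa⟩ y ⟨hyS, hyL⟩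
  by_contra hxy
  exact hyL ⟨hyS, a, ha, (not_lt.1 hxy).trans hxa⟩

theorem isPoor_of_cover {X ι : Type*} [LinearOrder X] (C : ι → Set X)
    (hC : ∀ i, OmegaLike (C i) ∨ OmegaStarLike (C i)) (s : Finset ι) :
    ∀ S : Set X, (S \ ⋃ i ∈ s, C i).Finite → IsPoor S := by
  classical
  induction s using Finset.induction_on with
  | empty =>
    intro S hS
    exact isPoor_of_finite (by simpa using hS)
  | insert i s hi ih =>
    intro S hS
    rw [Finset.set_biUnion_insert] at hS
    rcases hC i with h | h
    · exact isPoor_step C hC s ih (C i) h S hS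
    · exact IsPoor.of_dual (isPoor_step (X := Xᵒᵈ) C (fun i => (hC i).symm) s
        (fun T hT => IsPoor.dual (ih T hT)) (C i) h S hS)

/-- The map counting predecessors identifies an infinite ω-like set with an infinite set of
natural numbers. -/
theorem OmegaLike.nonempty_orderIso {X : Type*} [LinearOrder X] {S : Set X}
    (h : OmegaLike S) (hS : S.Infinite) : Nonempty (ℕ ≃o S) := by
  let f : S → ℕ := fun x => (S ∩ Set.Iic (x : X)).ncard
  have hf : StrictMono f := by
    intro x y hxy
    refine Set.ncard_lt_ncard ?_ (h y y.2)
    refine ⟨fun z hz => ⟨hz.1, le_trans hz.2 (le_of_lt hxy)⟩, fun hsub => ?_⟩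
    exact absurd (hsub ⟨y.2, le_refl (y : X)⟩).2 (not_le.2 hxy)
  have : Infinite S := hS.to_subtype
  have : Infinite (Set.range f) := (Set.infinite_range_of_injective hf.injective).to_subtype
  classical
  exact ⟨(Nat.Subtype.orderIsoOfNat (Set.range f)).trans (hf.orderIso f).symm⟩

theorem exists_carrier_orderIso {X : Type*} [LinearOrder X] {S : Set X}
    (h : OmegaLike S ∨ OmegaStarLike S) : ∃ χ : OT, Nonempty (χ.carrier ≃o S) := by
  by_cases hS : S.Finite
  · obtain ⟨t, rfl⟩ := hS.exists_finset_coe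
    exact ⟨.fin t.card, ⟨t.orderIsoOfFin rfl⟩⟩
  rcases h with h | h
  · exact ⟨.omega, h.nonempty_orderIso hS⟩
  · obtain ⟨e⟩ := OmegaLike.nonempty_orderIso (X := Xᵒᵈ) (S := S) h hS
    exact ⟨.omegaStar, ⟨e.dual⟩⟩

theorem IsPoor.exists_orderIso {X : Type*} [LinearOrder X] (h : IsPoor (Set.univ : Set X)) :
    ∃ (r : ℕ) (χ : Fin r → OT), Nonempty (X ≃o (Σₗ i, (χ i).carrier)) := by
  obtain ⟨l, hl, hS, hc⟩ := h
  have hχ : ∀ i : Fin l.length, ∃ χ : OT, Nonempty (χ.carrier ≃o l.get i) :=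
    fun i => exists_carrier_orderIso (hc _ (l.get_mem i))
  choose χ e using hχ
  let e' := fun i => (e i).some
  let g : (Σₗ i, (χ i).carrier) → X := fun p => (e' (ofLex p).1 (ofLex p).2 : X)
  have hg : StrictMono g := by
    rintro ⟨i, a⟩ ⟨j, b⟩ hab
    rcases Sigma.Lex.lt_def.1 hab with hij | ⟨hij, hlt⟩
    · exact List.pairwise_iff_get.1 hl i j hij _ (e' i a).2 _ (e' j b).2
    · obtain rfl : i = j := hij
      exact (e' i).strictMono hlt
  have hsurj : Function.Surjective g := by
    intro x
    obtain ⟨D, hD, hx⟩ := (hS x).1 trivial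
    obtain ⟨i, rfl⟩ := List.get_of_mem hD
    refine ⟨toLex ⟨i, (e' i).symm ⟨x, hx⟩⟩, ?_⟩
    change ((e' i ((e' i).symm ⟨x, hx⟩) : l.get i) : X) = x
    rw [OrderIso.apply_symm_apply]
  exact ⟨l.length, χ, ⟨(hg.orderIsoOfSurjective g hsurj).symm⟩⟩

theorem omegaLike_of_orderIso {X : Type*} [LinearOrder X] {S : Set X} (e : S ≃o ℕ) :
    OmegaLike S := by
  intro x hx
  refine ((Set.finite_Iic (e ⟨x, hx⟩)).image fun n => (e.symm n : X)).subset ?_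
  rintro y ⟨hy, hyx⟩
  exact ⟨e ⟨y, hy⟩, e.monotone hyx, by simp⟩

/-- An embedded copy of one of the allowed summands is a finite union of chains. -/
theorem exists_finite_pieces {X : Type*} [LinearOrder X] (χ : OT) (g : χ.carrier → X)
    (hg : StrictMono g) : ∃ P : Set (Set X), P.Finite ∧ (∀ a, ∃ B ∈ P, g a ∈ B) ∧
      ∀ B ∈ P, (∃ a, B = {a}) ∨ Nonempty (↥B ≃o ℕ) ∨ Nonempty (↥B ≃o ℕᵒᵈ) := by
  cases χ with
  | omega =>
    refine ⟨{Set.range g}, Set.finite_singleton _, fun a => ⟨_, rfl, a, rfl⟩, ?_⟩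
    rintro _ rfl
    exact Or.inr (Or.inl ⟨(hg.orderIso g).symm⟩)
  | omegaStar =>
    refine ⟨{Set.range g}, Set.finite_singleton _, fun a => ⟨_, rfl, a, rfl⟩, ?_⟩
    rintro _ rfl
    exact Or.inr (Or.inr ⟨(hg.orderIso g).symm⟩)
  | fin n =>
    have : Finite (OT.fin n).carrier := inferInstanceAs (Finite (Fin n))
    refine ⟨Set.range fun a => {g a}, Set.finite_range _, fun a => ⟨_, ⟨a, rfl⟩, rfl⟩, ?_⟩
    rintro _ ⟨a, rfl⟩
    exact Or.inl ⟨_, rfl⟩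

theorem poor_iff_finite_union_of_chains {X : Type*} [LinearOrder X] :
    (∃ (r : ℕ) (χ : Fin r → OT), Nonempty (X ≃o (Σₗ i, (χ i).carrier))) ↔
    (∃ (r : ℕ) (A : Fin r → Set X), (⋃ i, A i) = Set.univ ∧
      ∀ i, (∃ a, A i = {a}) ∨ Nonempty (↥(A i) ≃o ℕ) ∨ Nonempty (↥(A i) ≃o ℕᵒᵈ)) := by
  constructor
  · rintro ⟨r, χ, ⟨e⟩⟩
    have hmono : ∀ i, StrictMono fun a : (χ i).carrier => e.symm (toLex ⟨i, a⟩) :=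
      fun i a b hab => e.symm.strictMono (Sigma.Lex.lt_def.2 (Or.inr ⟨rfl, hab⟩))
    choose P hfin hcov hP using fun i => exists_finite_pieces (χ i) _ (hmono i)
    have hU : (⋃ i, P i).Finite := Set.finite_iUnion hfin
    have : Finite ↥(⋃ i, P i) := hU.to_subtype
    obtain ⟨n, ⟨E⟩⟩ := Finite.exists_equiv_fin ↥(⋃ i, P i)
    refine ⟨n, fun k => (E.symm k : Set X), ?_, fun k => ?_⟩
    · refine Set.eq_univ_of_forall fun x => ?_
      obtain ⟨B, hB, hx⟩ := hcov (ofLex (e x)).1 (ofLex (e x)).2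
      have hx' : x ∈ B := by
        have h : e.symm (e x) ∈ B := hx
        rwa [e.symm_apply_apply] at h
      refine Set.mem_iUnion.2 ⟨E ⟨B, Set.mem_iUnion.2 ⟨_, hB⟩⟩, ?_⟩
      rwa [E.symm_apply_apply]
    · obtain ⟨i, hi⟩ := Set.mem_iUnion.1 (E.symm k).2
      exact hP i _ hi
  · rintro ⟨r, A, hA, hc⟩
    refine IsPoor.exists_orderIso (isPoor_of_cover A (fun i => ?_) Finset.univ _ ?_)
    · rcases hc i with ⟨a, ha⟩ | ⟨⟨e⟩⟩ | ⟨⟨e⟩⟩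
      · rw [ha]
        exact Or.inl fun _ _ => (Set.finite_singleton a).subset Set.inter_subset_left
      · exact Or.inl (omegaLike_of_orderIso e)
      · exact Or.inr (omegaLike_of_orderIso (X := Xᵒᵈ) (S := A i) e.dual)
    · simp [hA]
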